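/- Let A and B be the companion matrices of f(x) = (x-1)^6 and g(x) = (x+1)^4(x^2-x+1) respectively, regarded as elements of GL(6,ℤ). Then the elements t = A⁻¹B and r = A⁻¹BA both have infinite order, the subgroup of GL(6,ℤ) generated by A and B equals the subgroup generated by t and r, and this group is the internal free product of the cyclic subgroups ⟨t⟩ and ⟨r⟩; in particular, the hypergeometric group Γ(α,β) with α = (0,0,0,0,0,0) and β = (1/2,1/2,1/2,1/2,1/6,5/6) is isomorphic to ℤ * ℤ, a free group of rank 2. -/

import Mathlib

open Matrix

/-- The companion matrix of `f(x) = (x-1)^6 = x^6 - 6x^5 + 15x^4 - 20x^3 + 15x^2 - 6x + 1`. -/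
def companionF : Matrix (Fin 6) (Fin 6) ℤ :=
  !![0,0,0,0,0,-1; 1,0,0,0,0,6; 0,1,0,0,0,-15; 0,0,1,0,0,20; 0,0,0,1,0,-15; 0,0,0,0,1,6]

/-- The companion matrix of `g(x) = (x+1)^4(x^2-x+1) = x^6 + 3x^5 + 3x^4 + 2x^3 + 3x^2 + 3x + 1`. -/
def companionG : Matrix (Fin 6) (Fin 6) ℤ :=
  !![0,0,0,0,0,-1; 1,0,0,0,0,-3; 0,1,0,0,0,-3; 0,0,1,0,0,-2; 0,0,0,1,0,-3; 0,0,0,0,1,-3]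

/-!
Over `ℚ`, a vector `y` corresponds to a sequence `σ : ℤ → ℚ` of the form cubic polynomial plus
mean-zero function of period three, in such a way that `r = A⁻¹BA` acts as `σ ↦ -σ(· + 1)` and
`t = A⁻¹B` acts as the transvection `σ ↦ σ + σ(0) w`, with `w` an odd sequence. Both are
conjugated to their inverses by `σ ↦ -σ(- ·)`, whose invariants are the odd sequences.

Let the even part of `σ` lie, up to sign, in a suitable cone, and compare `|σ(0)|` with three linear
forms of the odd part, scaled so that `tⁿ` adds `2 n σ(0)` to each. If all of them are smaller than
`|σ(0)|` in absolute value, then after `tⁿ` with `n ≠ 0` all of them exceed it, with a common sign.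
Conversely, if all of them exceed it with a common sign, then, up to signs, a single shift leads
into a cone that is stable under the shift and on which all three forms are smaller than `σ(0)` in
absolute value. This is a game of ping-pong.
-/

section FreeGroup

open Monoid
open scoped Pointwise

variable {G : Type*} [Group G]

theorem injective_freeGroup_lift_of_zpow_ping_pong {ι α : Type*} [Nontrivial ι] [MulAction G α]
    (a : ι → G) (X : ι → Set α) (hne : ∀ i, (X i).Nonempty)
    (hdisj : Pairwise fun i j => Disjoint (X i) (X j))
    (hpp : Pairwise fun i j => ∀ n : ℤ, n ≠ 0 → ∀ x ∈ X j, a i ^ n • x ∈ X i) :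
    Function.Injective (FreeGroup.lift a) := by
  let f : ∀ _ : ι, FreeGroup Unit →* G := fun i => FreeGroup.lift fun _ => a i
  have lift_eq : FreeGroup.lift a = (CoprodI.lift f).comp freeGroupEquivCoprodI.toMonoidHom := by
    ext i
    simp [f]
  have infinite : Infinite (FreeGroup Unit) := inferInstance
  rw [lift_eq, MonoidHom.coe_comp]
  refine .comp ?_ freeGroupEquivCoprodI.injective
  refine CoprodI.lift_injective_of_ping_pong f (.inr ⟨Classical.arbitrary ι, ?_⟩) X hne hdisj ?_
  · exact (Cardinal.natCast_le_aleph0 (n := 3)).trans (Cardinal.aleph0_le_mk _)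
  · intro i j hij
    refine FreeGroup.freeGroupUnitEquivInt.forall_congr_left.mpr fun n hn => ?_
    have n_ne_zero : n ≠ 0 := by
      rintro rfl
      exact hn (zpow_zero _)
    rintro _ ⟨x, hx, rfl⟩
    change f i (FreeGroup.of () ^ n) • x ∈ X i
    simpa only [f, map_zpow, FreeGroup.lift_apply_of] using hpp hij n n_ne_zero x hx

theorem not_isOfFinOrder_of_injective_freeGroup_lift {ι : Type*} {a : ι → G}
    (h : Function.Injective (FreeGroup.lift a)) (i : ι) : ¬ IsOfFinOrder (a i) := by
  rw [← FreeGroup.lift_apply_of (f := a), h.isOfFinOrder_iff]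
  exact not_isOfFinOrder_of_isMulTorsionFree (FreeGroup.of_ne_one i)

theorem range_freeGroup_lift_pair (t r : G) :
    (FreeGroup.lift ![t, r]).range = Subgroup.closure {t, r} := by
  rw [FreeGroup.range_lift_eq_closure, Matrix.range_cons_cons_empty]

theorem range_coprod_lift_zpowers (t r : G) :
    (Coprod.lift (Subgroup.zpowers t).subtype (Subgroup.zpowers r).subtype).range =
      Subgroup.closure {t, r} := by
  rw [Coprod.range_lift, Subgroup.range_subtype, Subgroup.range_subtype,
    Subgroup.zpowers_eq_closure, Subgroup.zpowers_eq_closure, ← Subgroup.closure_union,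
    Set.singleton_union]

theorem injective_coprod_lift_zpowers {t r : G}
    (h : Function.Injective (FreeGroup.lift ![t, r])) :
    Function.Injective
      (Coprod.lift (Subgroup.zpowers t).subtype (Subgroup.zpowers r).subtype) := by
  let t' : Subgroup.zpowers t := ⟨t, Subgroup.mem_zpowers t⟩
  let r' : Subgroup.zpowers r := ⟨r, Subgroup.mem_zpowers r⟩
  let κ : FreeGroup (Fin 2) →* Coprod (Subgroup.zpowers t) (Subgroup.zpowers r) :=
    FreeGroup.lift ![Coprod.inl t', Coprod.inr r']
  have comp_κ : (Coprod.lift (Subgroup.zpowers t).subtype (Subgroup.zpowers r).subtype).comp κ =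
      FreeGroup.lift ![t, r] := by
    ext i
    fin_cases i <;> simp [κ, t', r']
  have κ_surjective : Function.Surjective κ := by
    rw [← MonoidHom.range_eq_top, eq_top_iff, ← Coprod.range_inl_sup_range_inr, sup_le_iff]
    have κ_zpow_inl (n : ℤ) : κ (FreeGroup.of 0 ^ n) = Coprod.inl (t' ^ n) := by simp [κ]
    have κ_zpow_inr (n : ℤ) : κ (FreeGroup.of 1 ^ n) = Coprod.inr (r' ^ n) := by simp [κ]
    constructor
    · rintro _ ⟨⟨_, n, rfl⟩, rfl⟩
      exact ⟨_, κ_zpow_inl n⟩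
    · rintro _ ⟨⟨_, n, rfl⟩, rfl⟩
      exact ⟨_, κ_zpow_inr n⟩
  refine Function.Injective.of_comp_right ?_ κ_surjective
  rwa [← MonoidHom.coe_comp, comp_κ]

theorem closure_pair_eq_closure_inv_mul (A B : G) :
    Subgroup.closure {A, B} = Subgroup.closure {A⁻¹ * B, A⁻¹ * B * A} := by
  apply le_antisymm <;> rw [Subgroup.closure_le, Set.pair_subset_iff]
  · have ht : A⁻¹ * B ∈ Subgroup.closure {A⁻¹ * B, A⁻¹ * B * A} :=
      Subgroup.subset_closure (Set.mem_insert ..)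
    have hA : A ∈ Subgroup.closure {A⁻¹ * B, A⁻¹ * B * A} :=
      (mul_mem_cancel_left ht).1 (Subgroup.subset_closure (Set.mem_insert_of_mem _ rfl))
    exact ⟨hA, (mul_mem_cancel_left (inv_mem hA)).1 ht⟩
  · have hA : A ∈ Subgroup.closure {A, B} := Subgroup.subset_closure (Set.mem_insert ..)
    have hB : B ∈ Subgroup.closure {A, B} := Subgroup.subset_closure (Set.mem_insert_of_mem _ rfl)
    have ht := mul_mem (inv_mem hA) hB
    exact ⟨ht, mul_mem ht hA⟩

end FreeGroup

section Dynamics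

variable {G α β : Type*} [Group G] [MulAction G α]

theorem zpow_smul_of_semiconj {g : G} {φ : α → β} {T : Equiv.Perm β}
    (h : ∀ x, φ (g • x) = T (φ x)) (n : ℤ) (x : α) : φ (g ^ n • x) = (T ^ n) (φ x) := by
  induction n generalizing x with
  | zero => simp
  | succ n ih =>
    rw [_root_.zpow_add_one, mul_smul, ih, h, _root_.zpow_add_one, Equiv.Perm.mul_apply]
  | pred n ih =>
    have h_inv : φ (g⁻¹ • x) = T⁻¹ (φ x) := by
      rw [Equiv.Perm.eq_inv_iff_eq, ← h, smul_inv_smul]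
    rw [_root_.zpow_sub_one, mul_smul, ih, h_inv, _root_.zpow_sub_one, Equiv.Perm.mul_apply]

theorem zpow_mapsTo_of_reversible {T ρ : Equiv.Perm β} {X Y Z : Set β} (hρ : ρ * T * ρ⁻¹ = T⁻¹)
    (hρX : Set.MapsTo (⇑ρ⁻¹) X X) (hρY : Set.MapsTo ρ Y Y) (hXZ : Set.MapsTo T X Z)
    (hZZ : Set.MapsTo T Z Z) (hZY : Z ⊆ Y) {n : ℤ} (hn : n ≠ 0) :
    Set.MapsTo (T ^ n) X Y := by
  have pos (m : ℕ) : Set.MapsTo (T ^ (m + 1)) X Y := by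
    rw [pow_succ, Equiv.Perm.coe_mul, ← Equiv.Perm.iterate_eq_pow]
    exact ((hZZ.iterate m).comp hXZ).mono_right hZY
  obtain ⟨_ | m, rfl | rfl⟩ := n.eq_nat_or_neg
  · exact absurd rfl hn
  · exact absurd rfl hn
  · exact pos m
  · have conj_pow : T ^ (-((m + 1 : ℕ) : ℤ)) = ρ * T ^ (m + 1) * ρ⁻¹ := by
      rw [_root_.zpow_neg, zpow_natCast, ← inv_pow, ← hρ, _root_.conj_pow]
    rw [conj_pow]
    exact (hρY.comp (pos m)).comp hρX

end Dynamics

/-- The sequence `k ↦ a k³ + b k² + c k + d + q k`, where `q` has period three, `q 0 = e`,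
`q 1 = f` and `q 2 = -e - f`. -/
@[ext]
structure QuasiCubic where
  a : ℚ
  b : ℚ
  c : ℚ
  d : ℚ
  e : ℚ
  f : ℚ

namespace QuasiCubic

/-- The sequence `-σ`. -/
@[simps]
instance : Neg QuasiCubic where
  neg x := ⟨-x.a, -x.b, -x.c, -x.d, -x.e, -x.f⟩

instance : InvolutiveNeg QuasiCubic where
  neg_neg x := by ext <;> simp

/-- The sequence `k ↦ -σ (k + 1)`. -/
@[simps apply]
def negShift : Equiv.Perm QuasiCubic where
  toFun x := ⟨-x.a, -(3 * x.a + x.b), -(3 * x.a + 2 * x.b + x.c), -(x.a + x.b + x.c + x.d),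
    -x.f, x.e + x.f⟩
  invFun x := ⟨-x.a, 3 * x.a - x.b, -3 * x.a + 2 * x.b - x.c, x.a - x.b + x.c - x.d,
    x.e + x.f, -x.e⟩
  left_inv x := by ext <;> dsimp only <;> ring
  right_inv x := by ext <;> dsimp only <;> ring

/-- The sequence `k ↦ -σ (-k)`. -/
def negReflect : Equiv.Perm QuasiCubic where
  toFun x := ⟨x.a, -x.b, x.c, -x.d, -x.e, x.e + x.f⟩
  invFun x := ⟨x.a, -x.b, x.c, -x.d, -x.e, x.e + x.f⟩
  left_inv x := by ext <;> simp
  right_inv x := by ext <;> simp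

/-- The sequence `σ + σ 0 • w`, where `9 w(k) = 32 k³ + 48 k + χ(k)` and `χ` is the nontrivial
Dirichlet character modulo three. -/
@[simps apply]
def transvection : Equiv.Perm QuasiCubic where
  toFun x := ⟨x.a + 32 / 9 * (x.d + x.e), x.b, x.c + 48 / 9 * (x.d + x.e), x.d, x.e,
    x.f + 1 / 9 * (x.d + x.e)⟩
  invFun x := ⟨x.a - 32 / 9 * (x.d + x.e), x.b, x.c - 48 / 9 * (x.d + x.e), x.d, x.e,
    x.f - 1 / 9 * (x.d + x.e)⟩
  left_inv x := by ext <;> simp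
  right_inv x := by ext <;> simp

/-- The term `σ 0`. -/
def valueZero (x : QuasiCubic) : ℚ := x.d + x.e

/-- Three linear forms in the odd part of `σ`, that is in `a`, `c` and `e + 2 f = q 1 - q (-1)`,
scaled to take the value `2` at the vector `w` of the transvection. -/
def oddForm (x : QuasiCubic) : Fin 3 → ℚ :=
  ![3 / 8 * x.a + 3 * (x.e + 2 * x.f), 3 / 4 * x.a - 3 * (x.e + 2 * x.f),
    1 / 2 * x.c - 1 / 4 * x.a + (x.e + 2 * x.f)]

/-- An open cone in the space of even parts of sequences. -/
def EvenPos (x : QuasiCubic) : Prop :=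
  0 < x.b ∧ 8 * x.e < x.d ∧ x.b < 2 * x.d + 8 * x.e

/-- The ping-pong set into which `transvection ^ n` maps `oddSmall` for `n ≠ 0`. -/
def oddLarge : Set QuasiCubic :=
  {x | (EvenPos x ∨ EvenPos (-x)) ∧
    ((∀ i, |valueZero x| < oddForm x i) ∨ ∀ i, |valueZero x| < -oddForm x i)}

/-- The ping-pong set into which `negShift ^ n` maps `oddLarge` for `n ≠ 0`. -/
def oddSmall : Set QuasiCubic :=
  {x | (EvenPos x ∨ EvenPos (-x)) ∧ ∀ i, |oddForm x i| < |valueZero x|}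

/-- A cone that is stable under `σ ↦ σ(· + 1)`. The last three conditions say that
`4 (q (k + 1) - q (k - 1)) < a` for all `k`. -/
structure ShiftStable (x : QuasiCubic) : Prop where
  evenPos : EvenPos x
  oddForm_lt : ∀ i, oddForm x i < valueZero x
  c_pos : 0 < x.c
  jump_zero_lt : 4 * (x.e + 2 * x.f) < x.a
  jump_one_lt : 4 * (-2 * x.e - x.f) < x.a
  jump_two_lt : 4 * (x.e - x.f) < x.a

@[simp]
lemma valueZero_neg (x : QuasiCubic) : valueZero (-x) = -valueZero x := by
  simp only [valueZero, neg_d, neg_e]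
  ring

@[simp]
lemma oddForm_neg (x : QuasiCubic) : oddForm (-x) = -oddForm x := by
  simp only [oddForm, neg_a, neg_c, neg_e, neg_f, neg_cons, neg_empty]
  ring_nf

@[simp]
lemma valueZero_negReflect (x : QuasiCubic) : valueZero (negReflect x) = -valueZero x := by
  simp only [valueZero, negReflect, Equiv.coe_fn_mk]
  ring

@[simp]
lemma oddForm_negReflect (x : QuasiCubic) : oddForm (negReflect x) = oddForm x := by
  simp only [oddForm, negReflect, Equiv.coe_fn_mk]
  ring_nf

lemma evenPos_negReflect {x : QuasiCubic} : EvenPos (negReflect x) ↔ EvenPos (-x) :=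
  Iff.rfl

lemma neg_negReflect (x : QuasiCubic) : -negReflect x = negReflect (-x) := by
  ext <;> simp [negReflect, add_comm]

lemma EvenPos.valueZero_pos {x : QuasiCubic} (h : EvenPos x) : 0 < valueZero x := by
  obtain ⟨hb, he, hbd⟩ := h
  unfold valueZero
  linarith

lemma forall_oddForm_lt {x : QuasiCubic} {u : ℚ} :
    (∀ i, oddForm x i < u) ↔ 3 / 8 * x.a + 3 * (x.e + 2 * x.f) < u ∧
      3 / 4 * x.a - 3 * (x.e + 2 * x.f) < u ∧
      1 / 2 * x.c - 1 / 4 * x.a + (x.e + 2 * x.f) < u := by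
  simp [Fin.forall_fin_succ, oddForm]

lemma forall_lt_oddForm {x : QuasiCubic} {u : ℚ} :
    (∀ i, u < oddForm x i) ↔ u < 3 / 8 * x.a + 3 * (x.e + 2 * x.f) ∧
      u < 3 / 4 * x.a - 3 * (x.e + 2 * x.f) ∧
      u < 1 / 2 * x.c - 1 / 4 * x.a + (x.e + 2 * x.f) := by
  simp [Fin.forall_fin_succ, oddForm]

lemma neg_negShift_apply (x : QuasiCubic) :
    -negShift x = ⟨x.a, 3 * x.a + x.b, 3 * x.a + 2 * x.b + x.c, x.a + x.b + x.c + x.d, x.f,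
      -(x.e + x.f)⟩ := by
  ext <;> simp only [negShift_apply, neg_a, neg_b, neg_c, neg_d, neg_e, neg_f, neg_neg]

lemma ShiftStable.neg_negShift {x : QuasiCubic} (h : ShiftStable x) :
    ShiftStable (-negShift x) := by
  obtain ⟨⟨hb, he, hbd⟩, hodd, hc, h0, h1, h2⟩ := h
  rw [forall_oddForm_lt, valueZero] at hodd
  obtain ⟨-, hodd1, -⟩ := hodd
  rw [neg_negShift_apply]
  refine ⟨⟨?_, ?_, ?_⟩, forall_oddForm_lt.2 ⟨?_, ?_, ?_⟩, ?_, ?_, ?_, ?_⟩ <;>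
    dsimp only [valueZero] <;> linarith

lemma shiftStable_neg_negShift_of_lt_oddForm {x : QuasiCubic} (hx : EvenPos x ∨ EvenPos (-x))
    (h : ∀ i, |valueZero x| < oddForm x i) : ShiftStable (-negShift x) := by
  obtain ⟨hpos0, hpos1, hpos2⟩ := forall_lt_oddForm.1 fun i => (le_abs_self _).trans_lt (h i)
  obtain ⟨hneg0, hneg1, hneg2⟩ := forall_lt_oddForm.1 fun i => (neg_le_abs _).trans_lt (h i)
  rw [neg_negShift_apply]
  obtain ⟨hb, he, hbd⟩ | ⟨hb, he, hbd⟩ := hx <;>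
    simp only [valueZero, neg_b, neg_d, neg_e] at * <;>
    refine ⟨⟨?_, ?_, ?_⟩, forall_oddForm_lt.2 ⟨?_, ?_, ?_⟩, ?_, ?_, ?_, ?_⟩ <;>
    dsimp only [valueZero] <;> linarith

lemma ShiftStable.mem_oddSmall {x : QuasiCubic} (h : ShiftStable x) : x ∈ oddSmall := by
  refine ⟨.inl h.evenPos, fun i => ?_⟩
  rw [abs_of_pos h.evenPos.valueZero_pos, abs_lt]
  refine ⟨?_, h.oddForm_lt i⟩
  revert i
  obtain ⟨⟨hb, he, hbd⟩, hodd, hc, h0, h1, h2⟩ := h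
  rw [forall_oddForm_lt, valueZero] at hodd
  rw [forall_lt_oddForm]
  simp only [valueZero]
  refine ⟨?_, ?_, ?_⟩ <;> linarith

lemma negReflect_mem_oddLarge {x : QuasiCubic} (hx : x ∈ oddLarge) :
    negReflect x ∈ oddLarge := by
  simpa [oddLarge, evenPos_negReflect, neg_negReflect, or_comm] using hx

lemma negReflect_mem_oddSmall {x : QuasiCubic} (hx : x ∈ oddSmall) :
    negReflect x ∈ oddSmall := by
  simpa [oddSmall, evenPos_negReflect, neg_negReflect, or_comm] using hx

lemma neg_mem_oddSmall {x : QuasiCubic} : -x ∈ oddSmall ↔ x ∈ oddSmall := by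
  simp [oddSmall, or_comm]

lemma negShift_neg (x : QuasiCubic) : negShift (-x) = -negShift x := by
  ext <;> simp only [negShift_apply, neg_a, neg_b, neg_c, neg_d, neg_e, neg_f] <;> ring

lemma negReflect_conj_negShift : negReflect * negShift * negReflect⁻¹ = negShift⁻¹ := by
  ext x <;> simp only [Equiv.Perm.mul_apply, Equiv.Perm.inv_def, negShift, negReflect,
    Equiv.symm_mk, Equiv.coe_fn_mk] <;> ring

lemma negShift_zpow_mem_oddSmall {n : ℤ} (hn : n ≠ 0) {x : QuasiCubic} (hx : x ∈ oddLarge) :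
    (negShift ^ n) x ∈ oddSmall := by
  refine zpow_mapsTo_of_reversible (Z := {x | ShiftStable x ∨ ShiftStable (-x)})
    negReflect_conj_negShift (fun _ => negReflect_mem_oddLarge)
    (fun _ => negReflect_mem_oddSmall) ?_ ?_ ?_ hn hx
  · rintro x ⟨hx, h | h⟩
    · exact .inr (shiftStable_neg_negShift_of_lt_oddForm hx h)
    · left
      rw [← neg_neg (negShift x), ← negShift_neg]
      exact shiftStable_neg_negShift_of_lt_oddForm (by rwa [neg_neg, or_comm]) (by simpa using h)
  · rintro x (h | h)
    · exact .inr h.neg_negShift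
    · left
      rw [← neg_neg (negShift x), ← negShift_neg]
      exact h.neg_negShift
  · rintro x (h | h)
    · exact h.mem_oddSmall
    · exact neg_mem_oddSmall.1 h.mem_oddSmall

lemma transvection_zpow_apply (n : ℤ) (x : QuasiCubic) :
    (transvection ^ n) x = ⟨x.a + 32 / 9 * (n * (x.d + x.e)), x.b,
      x.c + 48 / 9 * (n * (x.d + x.e)), x.d, x.e, x.f + 1 / 9 * (n * (x.d + x.e))⟩ := by
  induction n with
  | zero => simp
  | succ n ih =>
    rw [_root_.zpow_add_one, (Commute.zpow_self transvection n).eq, Equiv.Perm.mul_apply, ih]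
    ext <;> simp only [transvection_apply] <;> push_cast <;> ring
  | pred n ih =>
    rw [_root_.zpow_sub_one, (Commute.zpow_self transvection _).inv_right.eq, Equiv.Perm.mul_apply,
      ih]
    ext <;> simp only [transvection, Equiv.Perm.inv_def, Equiv.symm_mk, Equiv.coe_fn_mk] <;>
      push_cast <;> ring

lemma oddForm_transvection_zpow (n : ℤ) (x : QuasiCubic) (i : Fin 3) :
    oddForm ((transvection ^ n) x) i = oddForm x i + 2 * (n * valueZero x) := by
  rw [transvection_zpow_apply]
  fin_cases i <;>
    simp only [oddForm, valueZero, Fin.zero_eta, Fin.mk_one, Fin.reduceFinMk, cons_val] <;> ring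

lemma transvection_zpow_mem_oddLarge {n : ℤ} (hn : n ≠ 0) {x : QuasiCubic} (hx : x ∈ oddSmall) :
    (transvection ^ n) x ∈ oddLarge := by
  have valueZero_eq : valueZero ((transvection ^ n) x) = valueZero x := by
    rw [transvection_zpow_apply]
    rfl
  have le_abs : |valueZero x| ≤ |n * valueZero x| := by
    rw [abs_mul]
    exact le_mul_of_one_le_left (abs_nonneg _) (mod_cast Int.one_le_abs hn)
  refine ⟨?_, ?_⟩
  · rw [transvection_zpow_apply]
    exact hx.1
  simp only [valueZero_eq, oddForm_transvection_zpow]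
  obtain h | h := abs_choice (n * valueZero x)
  · refine .inl fun i => ?_
    linarith [neg_lt_of_abs_lt (hx.2 i)]
  · refine .inr fun i => ?_
    linarith [lt_of_abs_lt (hx.2 i)]

lemma disjoint_oddLarge_oddSmall : Disjoint oddLarge oddSmall := by
  refine Set.disjoint_left.2 fun x hlarge hsmall => ?_
  obtain h | h := hlarge.2
  · exact (h 0).not_ge ((le_abs_self _).trans (hsmall.2 0).le)
  · exact (h 0).not_ge ((neg_le_abs _).trans (hsmall.2 0).le)

theorem injective_freeGroup_lift {G α : Type*} [Group G] [MulAction G α] {t r : G}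
    {φ : α → QuasiCubic} (ht : ∀ y, φ (t • y) = transvection (φ y))
    (hr : ∀ y, φ (r • y) = negShift (φ y)) {y₀ : α} (hy₀ : φ y₀ ∈ oddLarge) :
    Function.Injective (FreeGroup.lift ![t, r]) := by
  have ht_mem (n : ℤ) (hn : n ≠ 0) (y : α) (hy : φ y ∈ oddSmall) : φ (t ^ n • y) ∈ oddLarge := by
    rw [zpow_smul_of_semiconj ht]
    exact transvection_zpow_mem_oddLarge hn hy
  have hr_mem (n : ℤ) (hn : n ≠ 0) (y : α) (hy : φ y ∈ oddLarge) : φ (r ^ n • y) ∈ oddSmall := by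
    rw [zpow_smul_of_semiconj hr]
    exact negShift_zpow_mem_oddSmall hn hy
  have disjoint_preimage : Disjoint (φ ⁻¹' oddLarge) (φ ⁻¹' oddSmall) :=
    disjoint_oddLarge_oddSmall.preimage φ
  refine injective_freeGroup_lift_of_zpow_ping_pong ![t, r] ![φ ⁻¹' oddLarge, φ ⁻¹' oddSmall]
    ?_ ?_ ?_
  · exact Fin.forall_fin_two.2 ⟨⟨y₀, hy₀⟩, r ^ (1 : ℤ) • y₀, hr_mem 1 one_ne_zero y₀ hy₀⟩
  · intro i j hij
    fin_cases i <;> fin_cases j <;>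
      first | exact absurd rfl hij | exact disjoint_preimage | exact disjoint_preimage.symm
  · intro i j hij
    fin_cases i <;> fin_cases j <;> first | exact absurd rfl hij | exact ht_mem | exact hr_mem

end QuasiCubic

section Companion

/-- The action of invertible matrices on column vectors. -/
instance {n R : Type*} [Fintype n] [DecidableEq n] [CommRing R] : MulAction (GL n R) (n → R) where
  smul g y := g.1 *ᵥ y
  one_smul := one_mulVec
  mul_smul g h y := (mulVec_mulVec y g.1 h.1).symm

lemma GL_smul_eq_mulVec {n R : Type*} [Fintype n] [DecidableEq n] [CommRing R] (g : GL n R)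
    (y : n → R) : g • y = g.1 *ᵥ y :=
  rfl

/-- The matrix of `t = A⁻¹B`, a transvection up to conjugation over `ℚ`. -/
def matT : Matrix (Fin 6) (Fin 6) ℤ :=
  !![1,0,0,0,0,-9; 0,1,0,0,0,12; 0,0,1,0,0,-22; 0,0,0,1,0,12; 0,0,0,0,1,-9; 0,0,0,0,0,1]

lemma matT_mulVec (y : Fin 6 → ℤ) :
    matT *ᵥ y =
      ![y 0 - 9 * y 5, y 1 + 12 * y 5, y 2 - 22 * y 5, y 3 + 12 * y 5, y 4 - 9 * y 5, y 5] := by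
  ext i
  fin_cases i <;> simp [matT, mulVec, dotProduct, Fin.sum_univ_six, sub_eq_add_neg]

lemma companionF_mulVec (y : Fin 6 → ℤ) :
    companionF *ᵥ y =
      ![-y 5, y 0 + 6 * y 5, y 1 - 15 * y 5, y 2 + 20 * y 5, y 3 - 15 * y 5, y 4 + 6 * y 5] := by
  ext i
  fin_cases i <;> simp [companionF, mulVec, dotProduct, Fin.sum_univ_six, sub_eq_add_neg]

lemma companionG_eq_companionF_mul_matT : companionG = companionF * matT := by
  decide +kernel

/-- The sequence `k ↦ 18 ((-r)ᵏ y)₅`, which is of this form because the characteristic polynomial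
of `-r` is `(x - 1)⁴ (x² + x + 1)`. -/
def toQuasiCubic (y : Fin 6 → ℤ) : QuasiCubic where
  a := -y 0 + y 1 - y 2 + y 3 - y 4 - 63 * y 5
  b := 6 * y 0 - 3 * y 1 + 3 * y 3 - 6 * y 4 + 9 * y 5
  c := -9 * y 0 + 3 * y 2 - 9 * y 4 - 72 * y 5
  d := 2 * y 0 + 2 * y 1 - 2 * y 3 - 2 * y 4 + 18 * y 5
  e := -2 * y 0 - 2 * y 1 + 2 * y 3 + 2 * y 4
  f := 2 * y 0 - 2 * y 2 - 2 * y 3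

lemma toQuasiCubic_matT_mulVec (y : Fin 6 → ℤ) :
    toQuasiCubic (matT *ᵥ y) = (toQuasiCubic y).transvection := by
  rw [matT_mulVec]
  ext <;> simp only [toQuasiCubic, QuasiCubic.transvection_apply, cons_val] <;> push_cast <;> ring

lemma toQuasiCubic_matT_mul_companionF_mulVec (y : Fin 6 → ℤ) :
    toQuasiCubic ((matT * companionF) *ᵥ y) = (toQuasiCubic y).negShift := by
  rw [← mulVec_mulVec, companionF_mulVec, matT_mulVec]
  ext <;> simp only [toQuasiCubic, QuasiCubic.negShift_apply, cons_val] <;> push_cast <;> ring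

lemma toQuasiCubic_single_five : toQuasiCubic (Pi.single 5 1) = ⟨-63, 9, -72, 18, 0, 0⟩ := by
  ext <;> simp [toQuasiCubic]

lemma toQuasiCubic_single_five_mem_oddLarge :
    toQuasiCubic (Pi.single 5 1) ∈ QuasiCubic.oddLarge := by
  rw [toQuasiCubic_single_five]
  refine ⟨.inl ?_, .inr ?_⟩
  · norm_num [QuasiCubic.EvenPos]
  · norm_num [Fin.forall_fin_succ, QuasiCubic.oddForm, QuasiCubic.valueZero]

variable {A B : GL (Fin 6) ℤ} (hA : A.1 = companionF) (hB : B.1 = companionG)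
include hA hB

lemma coe_inv_mul_eq_matT : (A⁻¹ * B).1 = matT := by
  rw [Units.val_mul, hB, companionG_eq_companionF_mul_matT, ← hA, Units.inv_mul_cancel_left]

theorem injective_freeGroup_lift_companion :
    Function.Injective (FreeGroup.lift ![A⁻¹ * B, A⁻¹ * B * A]) := by
  refine QuasiCubic.injective_freeGroup_lift (fun y => ?_) (fun y => ?_)
    toQuasiCubic_single_five_mem_oddLarge
  · rw [GL_smul_eq_mulVec, coe_inv_mul_eq_matT hA hB, toQuasiCubic_matT_mulVec]
  · rw [GL_smul_eq_mulVec, Units.val_mul, coe_inv_mul_eq_matT hA hB, hA,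
      toQuasiCubic_matT_mul_companionF_mulVec]

end Companion

/-- The hypergeometric group with `α = (0,0,0,0,0,0)`, `β = (1/2,1/2,1/2,1/2,1/6,5/6)` is
free of rank two: `t = A⁻¹B` and `r = A⁻¹BA` have infinite order, generate the group
generated by `A` and `B`, and the group is the internal free product of `⟨t⟩` and `⟨r⟩`;
in particular it is isomorphic to `ℤ * ℤ`, the free group of rank `2`. -/
theorem hypergeometric_free_of_rank_two
    (A B : GL (Fin 6) ℤ)
    (hA : (A : Matrix (Fin 6) (Fin 6) ℤ) = companionF)
    (hB : (B : Matrix (Fin 6) (Fin 6) ℤ) = companionG) :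
    ¬ IsOfFinOrder (A⁻¹ * B) ∧ ¬ IsOfFinOrder (A⁻¹ * B * A) ∧
    Subgroup.closure {A, B} = Subgroup.closure {A⁻¹ * B, A⁻¹ * B * A} ∧
    Function.Injective
      (Monoid.Coprod.lift (Subgroup.zpowers (A⁻¹ * B)).subtype
        (Subgroup.zpowers (A⁻¹ * B * A)).subtype) ∧
    (Monoid.Coprod.lift (Subgroup.zpowers (A⁻¹ * B)).subtype
        (Subgroup.zpowers (A⁻¹ * B * A)).subtype).range = Subgroup.closure {A, B} ∧
    Nonempty ((Subgroup.closure {A, B} : Subgroup (GL (Fin 6) ℤ)) ≃* FreeGroup (Fin 2)) := by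
  have h_inj := injective_freeGroup_lift_companion hA hB
  have h_closure := closure_pair_eq_closure_inv_mul A B
  refine ⟨not_isOfFinOrder_of_injective_freeGroup_lift h_inj 0,
    not_isOfFinOrder_of_injective_freeGroup_lift h_inj 1, h_closure,
    injective_coprod_lift_zpowers h_inj, ?_, ?_⟩
  · rw [h_closure, range_coprod_lift_zpowers]
  · rw [h_closure, ← range_freeGroup_lift_pair]
    exact ⟨(MonoidHom.ofInjective h_inj).symm⟩
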